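/- Under the decoy-state assumptions, the single-photon yield satisfies Y(1) ≥ Y₁^L, where Y₁^L = μ/(μ(ν₁ − ν₂) − (ν₁² − ν₂²)) · [ Q(ν₁)·e^{ν₁} − Q(ν₂)·e^{ν₂} − ((ν₁² − ν₂²)/μ²)·(Q(μ)·e^{μ} − Y₀^L) ] and Y₀^L = max{ (ν₁·Q(ν₂)·e^{ν₂} − ν₂·Q(ν₁)·e^{ν₁}) / (ν₁ − ν₂), 0 }. -/

import Mathlib

/-- The gain for intensity `m` with yields `Y`: Poisson average of the yields. -/
noncomputable def decoyGain (Y : ℕ → ℝ) (m : ℝ) : ℝ :=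
  ∑' i : ℕ, Real.exp (-m) * m ^ i / (Nat.factorial i) * Y i

/-!
Write `Q(m) e^m = Y 0 + m * Y 1 + T m`, where `T` collects the terms of order at least two.
Comparing coefficients gives `ν₁ * T ν₂ ≤ ν₂ * T ν₁`, which bounds `Y 0` from below. Likewise
`ν₁ ^ n - ν₂ ^ n ≤ (ν₁ ^ 2 - ν₂ ^ 2) * μ ^ (n - 2)` for `2 ≤ n`, as `ν₁ + ν₂ ≤ μ`, and this bounds
`T ν₁ - T ν₂` by a multiple of `T μ`. Eliminating `T μ` through `Q(μ) e^μ` leaves a linear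
inequality in `Y 0` and `Y 1`, in which `Y 0` may be replaced by its lower bound.
-/

open scoped Nat

section PowerInequalities

variable {R : Type*} [CommRing R] [PartialOrder R] [IsOrderedRing R] {a b m : R}

theorem mul_pow_le_mul_pow_of_le (hb : 0 ≤ b) (hab : b ≤ a) {n : ℕ} (hn : n ≠ 0) :
    a * b ^ n ≤ b * a ^ n := by
  obtain ⟨k, rfl⟩ := Nat.exists_eq_succ_of_ne_zero hn
  calc a * b ^ (k + 1) = a * b * b ^ k := by ring
    _ ≤ a * b * a ^ k := by
      have ha : 0 ≤ a := hb.trans hab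
      gcongr
    _ = b * a ^ (k + 1) := by ring

theorem pow_succ_sub_pow_succ_le (hb : 0 ≤ b) (hab : b ≤ a) {n : ℕ} (hn : n ≠ 0) :
    a ^ (n + 1) - b ^ (n + 1) ≤ (a ^ n - b ^ n) * (a + b) := by
  have hcross : 0 ≤ b * a ^ n - a * b ^ n := sub_nonneg.2 (mul_pow_le_mul_pow_of_le hb hab hn)
  calc a ^ (n + 1) - b ^ (n + 1)
      ≤ a ^ (n + 1) - b ^ (n + 1) + (b * a ^ n - a * b ^ n) := le_add_of_nonneg_right hcross
    _ = (a ^ n - b ^ n) * (a + b) := by ring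

theorem pow_add_sub_pow_add_le (hb : 0 ≤ b) (hab : b ≤ a) (hm : a + b ≤ m) {k : ℕ} (hk : k ≠ 0)
    (n : ℕ) : a ^ (n + k) - b ^ (n + k) ≤ (a ^ k - b ^ k) * m ^ n := by
  have hm₀ : 0 ≤ m := (add_nonneg (hb.trans hab) hb).trans hm
  induction n with
  | zero => simp
  | succ n ih =>
    have hpow : 0 ≤ a ^ (n + k) - b ^ (n + k) := sub_nonneg.2 (pow_le_pow_left₀ hb hab _)
    calc a ^ (n + 1 + k) - b ^ (n + 1 + k)
        = a ^ (n + k + 1) - b ^ (n + k + 1) := by rw [Nat.add_right_comm]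
      _ ≤ (a ^ (n + k) - b ^ (n + k)) * (a + b) := pow_succ_sub_pow_succ_le hb hab (by omega)
      _ ≤ (a ^ (n + k) - b ^ (n + k)) * m := by gcongr
      _ ≤ (a ^ k - b ^ k) * m ^ n * m := by gcongr
      _ = (a ^ k - b ^ k) * m ^ (n + 1) := by ring

end PowerInequalities

section Gain

variable {Y : ℕ → ℝ} {m μ ν₁ ν₂ : ℝ}

/-- The part of `decoyGain Y m * Real.exp m` that is due to pulses of at least two photons. -/
noncomputable def multiPhotonSeries (Y : ℕ → ℝ) (m : ℝ) : ℝ :=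
  ∑' i : ℕ, m ^ (i + 2) / (i + 2)! * Y (i + 2)

theorem summable_pow_div_factorial_mul_of_bounded {C : ℝ} (hY : ∀ i, |Y i| ≤ C) (m : ℝ) :
    Summable fun i : ℕ => m ^ i / i ! * Y i := by
  refine ((Real.summable_pow_div_factorial m).abs.mul_right C).of_norm_bounded fun i => ?_
  rw [Real.norm_eq_abs, abs_mul]
  gcongr
  exact hY i

theorem summable_pow_div_factorial_mul_of_abs_le (hm : |m| ≤ |μ|)
    (h : Summable fun i : ℕ => μ ^ i / i ! * Y i) : Summable fun i : ℕ => m ^ i / i ! * Y i := by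
  refine h.norm.of_norm_bounded fun i => ?_
  simp only [Real.norm_eq_abs, abs_mul, abs_div, abs_pow]
  gcongr

theorem decoyGain_mul_exp (Y : ℕ → ℝ) (m : ℝ) :
    decoyGain Y m * Real.exp m = ∑' i : ℕ, m ^ i / i ! * Y i := by
  rw [decoyGain, ← tsum_mul_right]
  refine tsum_congr fun i => ?_
  rw [Real.exp_neg]
  field_simp

theorem decoyGain_mul_exp_eq_add_multiPhotonSeries (h : Summable fun i : ℕ => m ^ i / i ! * Y i) :
    decoyGain Y m * Real.exp m = Y 0 + m * Y 1 + multiPhotonSeries Y m := by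
  rw [decoyGain_mul_exp, ← h.sum_add_tsum_nat_add 2, multiPhotonSeries]
  simp [Finset.sum_range_succ]

theorem hasSum_multiPhotonSeries (h : Summable fun i : ℕ => m ^ i / i ! * Y i) :
    HasSum (fun i : ℕ => m ^ (i + 2) / (i + 2)! * Y (i + 2)) (multiPhotonSeries Y m) :=
  ((summable_nat_add_iff 2).2 h).hasSum

theorem mul_multiPhotonSeries_le (hY : ∀ i, 0 ≤ Y i) (hν₂ : 0 ≤ ν₂) (hν : ν₂ ≤ ν₁)
    (h : Summable fun i : ℕ => ν₁ ^ i / i ! * Y i) :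
    ν₁ * multiPhotonSeries Y ν₂ ≤ ν₂ * multiPhotonSeries Y ν₁ := by
  have h₂ := summable_pow_div_factorial_mul_of_abs_le (abs_le_abs_of_nonneg hν₂ hν) h
  refine hasSum_le (fun i => ?_) ((hasSum_multiPhotonSeries h₂).mul_left ν₁)
    ((hasSum_multiPhotonSeries h).mul_left ν₂)
  have hYi := hY (i + 2)
  calc ν₁ * (ν₂ ^ (i + 2) / (i + 2)! * Y (i + 2))
      = ν₁ * ν₂ ^ (i + 2) / (i + 2)! * Y (i + 2) := by ring
    _ ≤ ν₂ * ν₁ ^ (i + 2) / (i + 2)! * Y (i + 2) := by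
      gcongr ?_ / _ * _
      exact mul_pow_le_mul_pow_of_le hν₂ hν (by omega)
    _ = ν₂ * (ν₁ ^ (i + 2) / (i + 2)! * Y (i + 2)) := by ring

theorem sq_mul_multiPhotonSeries_sub_le (hY : ∀ i, 0 ≤ Y i) (hν₂ : 0 ≤ ν₂) (hν : ν₂ ≤ ν₁)
    (hμ : ν₁ + ν₂ ≤ μ) (h : Summable fun i : ℕ => μ ^ i / i ! * Y i) :
    μ ^ 2 * (multiPhotonSeries Y ν₁ - multiPhotonSeries Y ν₂)
      ≤ (ν₁ ^ 2 - ν₂ ^ 2) * multiPhotonSeries Y μ := by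
  have h₁ : Summable fun i : ℕ => ν₁ ^ i / i ! * Y i :=
    summable_pow_div_factorial_mul_of_abs_le (abs_le_abs_of_nonneg (by linarith) (by linarith)) h
  have h₂ : Summable fun i : ℕ => ν₂ ^ i / i ! * Y i :=
    summable_pow_div_factorial_mul_of_abs_le (abs_le_abs_of_nonneg (by linarith) (by linarith)) h
  refine hasSum_le (fun i => ?_)
    (((hasSum_multiPhotonSeries h₁).sub (hasSum_multiPhotonSeries h₂)).mul_left (μ ^ 2))
    ((hasSum_multiPhotonSeries h).mul_left (ν₁ ^ 2 - ν₂ ^ 2))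
  have hYi := hY (i + 2)
  calc μ ^ 2 * (ν₁ ^ (i + 2) / (i + 2)! * Y (i + 2) - ν₂ ^ (i + 2) / (i + 2)! * Y (i + 2))
      = μ ^ 2 * (ν₁ ^ (i + 2) - ν₂ ^ (i + 2)) / (i + 2)! * Y (i + 2) := by ring
    _ ≤ μ ^ 2 * ((ν₁ ^ 2 - ν₂ ^ 2) * μ ^ i) / (i + 2)! * Y (i + 2) := by
      gcongr μ ^ 2 * ?_ / _ * _
      exact pow_add_sub_pow_add_le hν₂ hν hμ two_ne_zero i
    _ = (ν₁ ^ 2 - ν₂ ^ 2) * (μ ^ (i + 2) / (i + 2)! * Y (i + 2)) := by ring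

theorem vacuum_yield_lower_bound (hY : ∀ i, 0 ≤ Y i) (hν₂ : 0 ≤ ν₂) (hν : ν₂ < ν₁)
    (h : Summable fun i : ℕ => ν₁ ^ i / i ! * Y i) :
    max ((ν₁ * decoyGain Y ν₂ * Real.exp ν₂ - ν₂ * decoyGain Y ν₁ * Real.exp ν₁)
      / (ν₁ - ν₂)) 0 ≤ Y 0 := by
  have h₂ := summable_pow_div_factorial_mul_of_abs_le (abs_le_abs_of_nonneg hν₂ hν.le) h
  have htail := mul_multiPhotonSeries_le hY hν₂ hν.le h
  refine max_le ?_ (hY 0)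
  rw [div_le_iff₀ (sub_pos.2 hν), mul_assoc, mul_assoc,
    decoyGain_mul_exp_eq_add_multiPhotonSeries h, decoyGain_mul_exp_eq_add_multiPhotonSeries h₂]
  linarith

theorem sq_mul_decoyGain_sub_le (hY : ∀ i, 0 ≤ Y i) (hν₂ : 0 ≤ ν₂) (hν : ν₂ ≤ ν₁)
    (hμ : ν₁ + ν₂ ≤ μ) (h : Summable fun i : ℕ => μ ^ i / i ! * Y i) :
    μ ^ 2 * (decoyGain Y ν₁ * Real.exp ν₁ - decoyGain Y ν₂ * Real.exp ν₂)
      ≤ (ν₁ ^ 2 - ν₂ ^ 2) * (decoyGain Y μ * Real.exp μ - Y 0)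
        + μ * (μ * (ν₁ - ν₂) - (ν₁ ^ 2 - ν₂ ^ 2)) * Y 1 := by
  have h₁ : Summable fun i : ℕ => ν₁ ^ i / i ! * Y i :=
    summable_pow_div_factorial_mul_of_abs_le (abs_le_abs_of_nonneg (by linarith) (by linarith)) h
  have h₂ : Summable fun i : ℕ => ν₂ ^ i / i ! * Y i :=
    summable_pow_div_factorial_mul_of_abs_le (abs_le_abs_of_nonneg (by linarith) (by linarith)) h
  have htail := sq_mul_multiPhotonSeries_sub_le hY hν₂ hν hμ h
  rw [decoyGain_mul_exp_eq_add_multiPhotonSeries h, decoyGain_mul_exp_eq_add_multiPhotonSeries h₁,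
    decoyGain_mul_exp_eq_add_multiPhotonSeries h₂]
  linarith

theorem single_photon_yield_lower_bound_general (hY : ∀ i, 0 ≤ Y i)
    (h : Summable fun i : ℕ => μ ^ i / i ! * Y i)
    (hν₂ : 0 ≤ ν₂) (hν : ν₂ < ν₁) (hμ : ν₁ + ν₂ < μ) :
    Y 1 ≥
      μ / (μ * (ν₁ - ν₂) - (ν₁ ^ 2 - ν₂ ^ 2)) *
        (decoyGain Y ν₁ * Real.exp ν₁ - decoyGain Y ν₂ * Real.exp ν₂
          - (ν₁ ^ 2 - ν₂ ^ 2) / μ ^ 2 *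
            (decoyGain Y μ * Real.exp μ
              - max ((ν₁ * decoyGain Y ν₂ * Real.exp ν₂ - ν₂ * decoyGain Y ν₁ * Real.exp ν₁)
                      / (ν₁ - ν₂)) 0)) := by
  have hμ₀ : 0 < μ := by linarith
  have hden : 0 < μ * (ν₁ - ν₂) - (ν₁ ^ 2 - ν₂ ^ 2) := by
    linarith [mul_pos (sub_pos.2 hν) (sub_pos.2 hμ)]
  have hsq : 0 ≤ ν₁ ^ 2 - ν₂ ^ 2 := sub_nonneg.2 (pow_le_pow_left₀ hν₂ hν.le 2)
  have h₁ : Summable fun i : ℕ => ν₁ ^ i / i ! * Y i :=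
    summable_pow_div_factorial_mul_of_abs_le (abs_le_abs_of_nonneg (by linarith) (by linarith)) h
  have hvacuum := mul_le_mul_of_nonneg_left (vacuum_yield_lower_bound hY hν₂ hν h₁) hsq
  have hgain := sq_mul_decoyGain_sub_le hY hν₂ hν.le hμ.le h
  generalize max _ (0 : ℝ) = Y₀ at hvacuum ⊢
  calc
    _ = (μ ^ 2 * (decoyGain Y ν₁ * Real.exp ν₁ - decoyGain Y ν₂ * Real.exp ν₂)
          - (ν₁ ^ 2 - ν₂ ^ 2) * (decoyGain Y μ * Real.exp μ - Y₀))
          / (μ * (μ * (ν₁ - ν₂) - (ν₁ ^ 2 - ν₂ ^ 2))) := by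
      field_simp
    _ ≤ Y 1 := by
      rw [div_le_iff₀ (mul_pos hμ₀ hden)]
      linarith

end Gain

theorem single_photon_yield_lower_bound (Y : ℕ → ℝ) (hY : ∀ i, 0 ≤ Y i ∧ Y i ≤ 1)
    (μ ν₁ ν₂ : ℝ) (hν₂ : 0 ≤ ν₂) (hν : ν₂ < ν₁) (hμ : ν₁ + ν₂ < μ) :
    Y 1 ≥
      μ / (μ * (ν₁ - ν₂) - (ν₁ ^ 2 - ν₂ ^ 2)) *
        (decoyGain Y ν₁ * Real.exp ν₁ - decoyGain Y ν₂ * Real.exp ν₂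
          - (ν₁ ^ 2 - ν₂ ^ 2) / μ ^ 2 *
            (decoyGain Y μ * Real.exp μ
              - max ((ν₁ * decoyGain Y ν₂ * Real.exp ν₂ - ν₂ * decoyGain Y ν₁ * Real.exp ν₁)
                      / (ν₁ - ν₂)) 0)) :=
  single_photon_yield_lower_bound_general (fun i => (hY i).1)
    (summable_pow_div_factorial_mul_of_bounded
      (fun i => abs_le.2 ⟨by linarith [(hY i).1], (hY i).2⟩) μ)
    hν₂ hν hμ
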